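/- arXiv:2604.02195 — 9 statements merged into one kernel-verified Lean document; each statement's English description precedes it below -/
import Mathlib

section
/- Sorting stability: let N be a natural number, let a, b : Fin N → ℝ be nondecreasing functions, let σ be a permutation of Fin N, and let δ ≥ 0. If |a(i) − b(σ(i))| ≤ δ for every i, then |a(i) − b(i)| ≤ δ for every i. -/
/-- Pigeonhole: `σ` cannot map the `N - i` indices `≥ i` injectively into the
`N - i - 1` indices `> i`. -/
lemma exists_ge_map_le {N : ℕ} (σ : Equiv.Perm (Fin N)) (i : Fin N) :
    ∃ j, i ≤ j ∧ σ j ≤ i := by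
  by_contra! hc
  have hcard : (Finset.Ici i).card ≤ (Finset.Ioi i).card :=
    Finset.card_le_card_of_injOn σ
      (fun j hj => by simpa using hc j (by simpa using hj)) σ.injective.injOn
  have hi := i.isLt
  rw [Fin.card_Ici, Fin.card_Ioi] at hcard
  omega

/-- Sorting stability: if two nondecreasing finite sequences can be matched by a
permutation up to error `δ`, then the identity matching is also within `δ`. -/
theorem sorting_stability (N : ℕ) (a b : Fin N → ℝ)
    (ha : Monotone a) (hb : Monotone b)
    (σ : Equiv.Perm (Fin N)) (δ : ℝ) (hδ : 0 ≤ δ)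
    (h : ∀ i, |a i - b (σ i)| ≤ δ) :
    ∀ i, |a i - b i| ≤ δ := by
  intro i
  -- `a i ≤ a j ≤ b (σ j) + δ ≤ b i + δ`, and `b i ≤ b k ≤ a (σ⁻¹ k) + δ ≤ a i + δ`
  obtain ⟨j, hij, hji⟩ := exists_ge_map_le σ i
  obtain ⟨k, hik, hki⟩ := exists_ge_map_le σ.symm i
  have hj := abs_le.mp (h j)
  have hk := abs_le.mp (h (σ.symm k))
  rw [Equiv.apply_symm_apply] at hk
  rw [abs_le]
  constructor
  · linarith [hb hik, ha hki, hk.1]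
  · linarith [ha hij, hb hji, hj.2]
end

section
/- arsinh-Lipschitz bound along an eigenvalue branch: let I ⊆ ℝ be an interval, let λ : ℝ → ℝ and λ' : ℝ → ℝ be such that λ has derivative λ'(t) at every t ∈ I, and let L ≥ 0 satisfy |λ'(t)| ≤ L·|λ(t)| for all t ∈ I. Then for all a, b ∈ I one has |arsinh(λ(a)) − arsinh(λ(b))| ≤ L·|a − b|. -/
/-- `arsinh`-Lipschitz bound along an eigenvalue branch: if `λ` is differentiable on an
interval `I` with `|λ'(t)| ≤ L·|λ(t)|` there, then `arsinh ∘ λ` is `L`-Lipschitz on `I`. -/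
theorem arsinh_lipschitz_along_branch (I : Set ℝ) (hI : I.OrdConnected)
    (lam lam' : ℝ → ℝ)
    (hderiv : ∀ t ∈ I, HasDerivAt lam (lam' t) t)
    (L : ℝ) (hL : 0 ≤ L)
    (hbound : ∀ t ∈ I, |lam' t| ≤ L * |lam t|)
    (a b : ℝ) (ha : a ∈ I) (hb : b ∈ I) :
    |Real.arsinh (lam a) - Real.arsinh (lam b)| ≤ L * |a - b| := by
  -- Mean value inequality: `|(arsinh ∘ λ)'| = |λ'| / √(1 + λ²) ≤ L |λ| / √(1 + λ²) ≤ L`.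
  have key := Convex.norm_image_sub_le_of_norm_hasDerivWithin_le (C := L)
    (fun t ht => (hderiv t ht).arsinh.hasDerivWithinAt (s := I)) ?_ hI.convex hb ha
  · simpa only [Real.norm_eq_abs] using key
  · intro t ht
    have hpos : 0 < √(1 + lam t ^ 2) := Real.sqrt_pos.mpr (by positivity)
    have hle : |lam t| ≤ √(1 + lam t ^ 2) := Real.abs_le_sqrt (by linarith)
    rw [smul_eq_mul, Real.norm_eq_abs, abs_mul, abs_inv, abs_of_pos hpos,
      inv_mul_le_iff₀ hpos, mul_comm _ L]
    exact (hbound t ht).trans (mul_le_mul_of_nonneg_left hle hL)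
end

section
/- Uniqueness for the symmetrized Sylvester equation: let 𝒜 be a unital C*-algebra, let S, T ∈ 𝒜 be self-adjoint, and let m > 0 satisfy m·1 ≤ S and m·1 ≤ T. If X ∈ 𝒜 satisfies S·X + X·T = 0, then X = 0. Consequently, for each Y ∈ 𝒜 the equation S·X + X·T = Y has at most one solution X ∈ 𝒜. -/
/-!
For a real `c` dominating both norms, `S X + X T = 0` is equivalent to
`2c X = (c - S) X + X (c - T)`. Since `0 ≤ c - S ≤ c - m` and likewise for `T`, both `c - S` and
`c - T` have norm at most `c - m`, whence `2c ‖X‖ ≤ 2(c - m) ‖X‖`, which forces `X = 0`.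
Uniqueness for a general right-hand side follows by linearity.
-/

theorem norm_smul_one_sub_le {𝒜 : Type*} [CStarAlgebra 𝒜] [PartialOrder 𝒜] [StarOrderedRing 𝒜]
    {A : 𝒜} (hA : IsSelfAdjoint A) {m c : ℝ} (hmc : m ≤ c) (hmA : m • (1 : 𝒜) ≤ A)
    (hc : ‖A‖ ≤ c) : ‖c • (1 : 𝒜) - A‖ ≤ c - m := by
  have h_nonneg : 0 ≤ c • (1 : 𝒜) - A := by
    rw [sub_nonneg, ← Algebra.algebraMap_eq_smul_one]
    exact hA.le_algebraMap_norm_self.trans (algebraMap_mono 𝒜 hc)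
  rw [CStarAlgebra.norm_le_iff_le_algebraMap _ (sub_nonneg.2 hmc) h_nonneg,
    Algebra.algebraMap_eq_smul_one, sub_smul]
  exact sub_le_sub_left hmA _

/-- Uniqueness for the symmetrized Sylvester equation in a unital C*-algebra:
for self-adjoint `S, T` with `m • 1 ≤ S`, `m • 1 ≤ T`, `m > 0`, the only solution of
`S * X + X * T = 0` is `X = 0`; consequently, for each `Y` the equation
`S * X + X * T = Y` has at most one solution. -/
theorem sylvester_solution_unique {𝒜 : Type*} [CStarAlgebra 𝒜] [PartialOrder 𝒜]
    [StarOrderedRing 𝒜]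
    (S T : 𝒜) (hS : IsSelfAdjoint S) (hT : IsSelfAdjoint T)
    (m : ℝ) (hm : 0 < m) (hmS : m • (1 : 𝒜) ≤ S) (hmT : m • (1 : 𝒜) ≤ T) :
    (∀ X : 𝒜, S * X + X * T = 0 → X = 0) ∧
    (∀ Y X₁ X₂ : 𝒜, S * X₁ + X₁ * T = Y → S * X₂ + X₂ * T = Y → X₁ = X₂) := by
  have key : ∀ X : 𝒜, S * X + X * T = 0 → X = 0 := by
    intro X hX
    -- Adding `m` makes `m ≤ c` immediate.
    obtain ⟨c, hmc, hSc, hTc⟩ : ∃ c : ℝ, m ≤ c ∧ ‖S‖ ≤ c ∧ ‖T‖ ≤ c :=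
      ⟨m + ‖S‖ + ‖T‖, by linarith [norm_nonneg S, norm_nonneg T],
        by linarith [norm_nonneg T], by linarith [norm_nonneg S]⟩
    have h_id : (2 * c) • X = (c • (1 : 𝒜) - S) * X + X * (c • (1 : 𝒜) - T) := by
      have h : (c • (1 : 𝒜) - S) * X + X * (c • (1 : 𝒜) - T)
          = (2 * c) • X - (S * X + X * T) := by
        simp only [sub_mul, mul_sub, smul_mul_assoc, mul_smul_comm, one_mul, mul_one, two_mul,
          add_smul]
        abel
      rw [h, hX, sub_zero]
    have h_le : 2 * c * ‖X‖ ≤ (c - m) * ‖X‖ + ‖X‖ * (c - m) := by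
      calc 2 * c * ‖X‖ = ‖(2 * c) • X‖ := by
            rw [norm_smul, Real.norm_of_nonneg (by linarith)]
        _ ≤ ‖c • (1 : 𝒜) - S‖ * ‖X‖ + ‖X‖ * ‖c • (1 : 𝒜) - T‖ := by
            rw [h_id]
            exact (norm_add_le _ _).trans (add_le_add (norm_mul_le _ _) (norm_mul_le _ _))
        _ ≤ (c - m) * ‖X‖ + ‖X‖ * (c - m) := by
            gcongr
            · exact norm_smul_one_sub_le hS hmc hmS hSc
            · exact norm_smul_one_sub_le hT hmc hmT hTc
    have h_zero : ‖X‖ ≤ 0 := by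
      by_contra! hpos
      nlinarith [mul_pos hm hpos]
    exact norm_le_zero_iff.1 h_zero
  refine ⟨key, fun Y X₁ X₂ h₁ h₂ => sub_eq_zero.1 (key _ ?_)⟩
  rw [mul_sub, sub_mul, sub_add_sub_comm, h₁, h₂, sub_self]
end

section
/- Lipschitz estimate for the operator square root: let 𝒜 be a unital C*-algebra, let a, b ∈ 𝒜 be self-adjoint, and let m > 0 satisfy m·1 ≤ a and m·1 ≤ b. Then ‖√a − √b‖ ≤ ‖a − b‖ / (2√m). -/
/-!
With `s = √m`, `δ = ‖a - b‖` and `k = δ / (2s)`, operator monotonicity of the square root gives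
`s ≤ √a`, so `(√a + k)² = a + 2k√a + k² ≥ a + 2ks = a + δ ≥ b`. Monotonicity of the square root
once more gives `√b ≤ √a + k` (`sqrt_le_sqrt_add`). Exchanging `a` and `b` traps the self-adjoint
element `√a - √b` between `-k` and `k`, and hence `‖√a - √b‖ ≤ k`
(`norm_le_of_neg_le_of_le`).
-/

lemma norm_le_of_neg_le_of_le {A : Type*} [CStarAlgebra A] [PartialOrder A] [StarOrderedRing A]
    {d : A} {k : ℝ} (hk : 0 ≤ k) (hd : IsSelfAdjoint d)
    (hl : -(k • (1 : A)) ≤ d) (hu : d ≤ k • (1 : A)) : ‖d‖ ≤ k := by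
  obtain (_ | _) := subsingleton_or_nontrivial A
  · simpa [Subsingleton.elim d 0] using hk
  rw [← neg_smul, ← Algebra.algebraMap_eq_smul_one, algebraMap_le_iff_le_spectrum hd] at hl
  rw [← Algebra.algebraMap_eq_smul_one, le_algebraMap_iff_spectrum_le hd] at hu
  obtain h | h := CStarAlgebra.norm_or_neg_norm_mem_spectrum hd
  · exact hu _ h
  · linarith [hl _ h]

/-- The one-sided estimate: operator monotonicity reduces it to `b ≤ (√a + k)²`,
where `k = ‖a - b‖ / (2√m)`. -/
lemma sqrt_le_sqrt_add {A : Type*} [CStarAlgebra A] [PartialOrder A] [StarOrderedRing A]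
    {a b : A} (ha : IsSelfAdjoint a) (hb : IsSelfAdjoint b) {m : ℝ} (hm : 0 < m)
    (hma : m • (1 : A) ≤ a) :
    CFC.sqrt b ≤ CFC.sqrt a + (‖a - b‖ / (2 * Real.sqrt m)) • (1 : A) := by
  have hs : 0 < Real.sqrt m := Real.sqrt_pos.2 hm
  set s := Real.sqrt m with hs_def
  set k := ‖a - b‖ / (2 * s) with hk_def
  have hk : 0 ≤ k := by positivity
  have hks : 2 * k * s = ‖a - b‖ := by rw [hk_def]; field_simp
  have h1 : (0 : A) ≤ 1 := zero_le_one
  have ha0 : 0 ≤ a := (smul_nonneg hm.le h1).trans hma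
  have hsx : s • (1 : A) ≤ CFC.sqrt a := by
    have h : CFC.sqrt (m • (1 : A)) = s • (1 : A) := by
      refine CFC.sqrt_unique ?_ (smul_nonneg hs.le h1)
      rw [smul_mul_smul_comm, mul_one, Real.mul_self_sqrt hm.le]
    rw [← h]
    exact CFC.sqrt_le_sqrt _ _ hma
  have hx0 : 0 ≤ CFC.sqrt a := CFC.sqrt_nonneg a
  have hba : b ≤ a + ‖a - b‖ • (1 : A) := by
    have h := (ha.sub hb).neg_algebraMap_norm_le_self
    rw [Algebra.algebraMap_eq_smul_one, neg_le_sub_iff_le_add] at h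
    exact h
  have hsq : (CFC.sqrt a + k • (1 : A)) * (CFC.sqrt a + k • (1 : A))
      = a + (2 * k) • CFC.sqrt a + (k * k) • (1 : A) := by
    rw [add_mul, mul_add, mul_add, CFC.sqrt_mul_sqrt_self a ha0, smul_mul_smul_comm]
    simp only [mul_smul_comm, smul_mul_assoc, mul_one, one_mul, two_mul, add_smul]
    abel
  have hle : b ≤ (CFC.sqrt a + k • (1 : A)) * (CFC.sqrt a + k • (1 : A)) := by
    rw [hsq]
    calc b ≤ a + ‖a - b‖ • (1 : A) := hba
      _ = a + (2 * k) • (s • (1 : A)) := by rw [smul_smul, hks]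
      _ ≤ a + (2 * k) • CFC.sqrt a := by
        have := smul_le_smul_of_nonneg_left hsx (by positivity : 0 ≤ 2 * k)
        gcongr
      _ ≤ a + (2 * k) • CFC.sqrt a + (k * k) • (1 : A) :=
        le_add_of_nonneg_right (smul_nonneg (by positivity) h1)
  have h := CFC.sqrt_le_sqrt _ _ hle
  rwa [CFC.sqrt_mul_self _ (add_nonneg hx0 (smul_nonneg hk h1))] at h

/-- Lipschitz estimate for the operator square root in a unital C*-algebra:
if `a, b` are self-adjoint with `m • 1 ≤ a`, `m • 1 ≤ b`, `m > 0`, then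
`‖√a − √b‖ ≤ ‖a − b‖ / (2√m)`. -/
theorem sqrt_lipschitz {𝒜 : Type*} [CStarAlgebra 𝒜] [PartialOrder 𝒜]
    [StarOrderedRing 𝒜]
    (a b : 𝒜) (ha : IsSelfAdjoint a) (hb : IsSelfAdjoint b)
    (m : ℝ) (hm : 0 < m) (hma : m • (1 : 𝒜) ≤ a) (hmb : m • (1 : 𝒜) ≤ b) :
    ‖CFC.sqrt a - CFC.sqrt b‖ ≤ ‖a - b‖ / (2 * Real.sqrt m) := by
  have hl := sqrt_le_sqrt_add ha hb hm hma
  have hu := sqrt_le_sqrt_add hb ha hm hmb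
  rw [norm_sub_rev b a] at hu
  refine norm_le_of_neg_le_of_le (by positivity)
    ((IsSelfAdjoint.of_nonneg (CFC.sqrt_nonneg a)).sub
      (IsSelfAdjoint.of_nonneg (CFC.sqrt_nonneg b))) ?_ ?_
  · rwa [neg_le_sub_iff_le_add]
  · rwa [sub_le_iff_le_add']
end

section
/- Lipschitz estimate for the inverse operator square root: let 𝒜 be a unital C*-algebra, let a, b ∈ 𝒜 be self-adjoint, and let m > 0 satisfy m·1 ≤ a and m·1 ≤ b. Then √a and √b are invertible in 𝒜 and ‖(√a)⁻¹ − (√b)⁻¹‖ ≤ ‖a − b‖ / (2·m^{3/2}). -/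
/-!
Write `x = √a`, `y = √b`, `s = √m`; operator monotonicity of the square root gives `x, y ≥ s`.
The elementary engine is that `‖1 - ε x‖ ≤ 1 - ε s` for all small `ε > 0`.

* Since `z = (1 - ε x) z + ε x z`, this yields `s ‖z‖ ≤ ‖x z‖`, and likewise `s ‖z‖ ≤ ‖z y‖`.
* Since `d = (1 - ε x) d (1 - ε y) + ε (x d + d y) - ε² x d y`, letting `ε → 0` yields
  `2 s ‖d‖ ≤ ‖x d + d y‖`.

Taking `d = x - y`, where `x d + d y = x² - y² = a - b`, gives `2 s ‖x - y‖ ≤ ‖a - b‖`; taking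
`z = x⁻¹ - y⁻¹`, where `x z y = y - x`, gives `s² ‖x⁻¹ - y⁻¹‖ ≤ ‖x - y‖`. The product of the
two estimates is the claim, as `s³ = m ^ (3 / 2)`.
-/

section Aux

variable {𝒜 : Type*} [CStarAlgebra 𝒜] [PartialOrder 𝒜] [StarOrderedRing 𝒜]

lemma norm_one_sub_smul_le {x : 𝒜} {s ε : ℝ} (hs : 0 ≤ s) (hx : algebraMap ℝ 𝒜 s ≤ x)
    (hε : 0 ≤ ε) (hεx : ε * ‖x‖ ≤ 1) (hεs : ε * s ≤ 1) : ‖1 - ε • x‖ ≤ 1 - ε * s := by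
  have hx0 : 0 ≤ x := (algebraMap_nonneg 𝒜 hs).trans hx
  have h1 : ε • x ≤ 1 := by
    calc ε • x ≤ ε • algebraMap ℝ 𝒜 ‖x‖ :=
          smul_le_smul_of_nonneg_left (IsSelfAdjoint.le_algebraMap_norm_self (.of_nonneg hx0)) hε
      _ = algebraMap ℝ 𝒜 (ε * ‖x‖) := by rw [map_mul, Algebra.smul_def]
      _ ≤ algebraMap ℝ 𝒜 1 := algebraMap_mono 𝒜 hεx
      _ = 1 := map_one _
  rw [CStarAlgebra.norm_le_iff_le_algebraMap _ (by linarith) (sub_nonneg.2 h1), map_sub, map_one,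
    map_mul, ← Algebra.smul_def]
  exact sub_le_sub_left (smul_le_smul_of_nonneg_left hx hε) _

/-- The bound `‖1 - ε x‖ ≤ 1 - ε s` holds for all small `ε ≥ 0`, the right-hand side being
nonnegative as well. -/
lemma exists_small_bound {x : 𝒜} {s : ℝ} (hs : 0 ≤ s) (hx : algebraMap ℝ 𝒜 s ≤ x) :
    ∃ δ : ℝ, 0 < δ ∧ ∀ ε : ℝ, 0 ≤ ε → ε ≤ δ → 0 ≤ 1 - ε * s ∧ ‖1 - ε • x‖ ≤ 1 - ε * s := by
  refine ⟨(1 + ‖x‖ + s)⁻¹, by positivity, fun ε hε hεδ ↦ ?_⟩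
  have hpos : 0 < 1 + ‖x‖ + s := by positivity
  have h : ε * (1 + ‖x‖ + s) ≤ 1 := (le_inv_mul_iff₀' hpos).1 (by simpa using hεδ)
  have h1 : 0 ≤ ε * ‖x‖ := by positivity
  have h2 : 0 ≤ ε * s := by positivity
  exact ⟨by nlinarith, norm_one_sub_smul_le hs hx hε (by nlinarith) (by nlinarith)⟩

lemma mul_norm_le_norm_mul_left {x : 𝒜} {s : ℝ} (hs : 0 ≤ s) (hx : algebraMap ℝ 𝒜 s ≤ x)
    (z : 𝒜) : s * ‖z‖ ≤ ‖x * z‖ := by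
  obtain ⟨δ, hδ, h⟩ := exists_small_bound hs hx
  obtain ⟨-, h⟩ := h δ hδ.le le_rfl
  have hz : z = (1 - δ • x) * z + δ • (x * z) := by
    rw [sub_mul, smul_mul_assoc, one_mul, sub_add_cancel]
  have h1 : ‖z‖ ≤ (1 - δ * s) * ‖z‖ + δ * ‖x * z‖ := by
    calc ‖z‖ = ‖(1 - δ • x) * z + δ • (x * z)‖ := by rw [← hz]
      _ ≤ ‖(1 - δ • x) * z‖ + ‖δ • (x * z)‖ := norm_add_le _ _
      _ ≤ _ := by
        rw [norm_smul, Real.norm_of_nonneg hδ.le]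
        gcongr
        exact (norm_mul_le _ _).trans (by gcongr)
  exact le_of_mul_le_mul_left (by linarith) hδ

lemma mul_norm_le_norm_mul_right {x : 𝒜} {s : ℝ} (hs : 0 ≤ s) (hx : algebraMap ℝ 𝒜 s ≤ x)
    (z : 𝒜) : s * ‖z‖ ≤ ‖z * x‖ := by
  have hx' : IsSelfAdjoint x := .of_nonneg ((algebraMap_nonneg 𝒜 hs).trans hx)
  have := mul_norm_le_norm_mul_left hs hx (star z)
  rwa [norm_star, ← norm_star (x * star z), star_mul, star_star, hx'.star_eq] at this

/-- A lower bound for the Sylvester operator `d ↦ x d + d y`. -/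
lemma two_mul_norm_le_norm_sylvester {x y : 𝒜} {s : ℝ} (hs : 0 ≤ s)
    (hx : algebraMap ℝ 𝒜 s ≤ x) (hy : algebraMap ℝ 𝒜 s ≤ y) (d : 𝒜) :
    2 * s * ‖d‖ ≤ ‖x * d + d * y‖ := by
  obtain ⟨δ₁, hδ₁, h₁⟩ := exists_small_bound hs hx
  obtain ⟨δ₂, hδ₂, h₂⟩ := exists_small_bound hs hy
  have key : ∀ ε : ℝ, 0 < ε → ε ≤ min δ₁ δ₂ →
      2 * s * ‖d‖ ≤ ‖x * d + d * y‖ + ε * (s ^ 2 * ‖d‖ + ‖x * d * y‖) := by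
    intro ε hε hεδ
    obtain ⟨hn, h₁⟩ := h₁ ε hε.le (hεδ.trans (min_le_left _ _))
    obtain ⟨-, h₂⟩ := h₂ ε hε.le (hεδ.trans (min_le_right _ _))
    have hd : d = (1 - ε • x) * d * (1 - ε • y) + ε • (x * d + d * y)
        - (ε * ε) • (x * d * y) := by
      simp only [sub_mul, mul_sub, smul_mul_assoc, mul_smul_comm, one_mul, mul_one, smul_add,
        mul_smul, smul_sub]
      abel
    have h3 : ‖d‖ ≤ (1 - ε * s) * ‖d‖ * (1 - ε * s) + ε * ‖x * d + d * y‖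
        + ε * ε * ‖x * d * y‖ := by
      calc ‖d‖ = ‖(1 - ε • x) * d * (1 - ε • y) + ε • (x * d + d * y)
            - (ε * ε) • (x * d * y)‖ := by rw [← hd]
        _ ≤ ‖(1 - ε • x) * d * (1 - ε • y)‖ + ‖ε • (x * d + d * y)‖
            + ‖(ε * ε) • (x * d * y)‖ :=
          (norm_sub_le _ _).trans (add_le_add_left (norm_add_le _ _) _)
        _ ≤ _ := by
          rw [norm_smul, norm_smul, Real.norm_of_nonneg hε.le,
            Real.norm_of_nonneg (mul_pos hε hε).le]
          gcongr
          exact (norm_mul₃_le).trans (by gcongr)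
    exact le_of_mul_le_mul_left (by linarith) hε
  have hlim : Filter.Tendsto
      (fun ε : ℝ ↦ ‖x * d + d * y‖ + ε * (s ^ 2 * ‖d‖ + ‖x * d * y‖))
      (nhdsWithin 0 (Set.Ioi 0)) (nhds ‖x * d + d * y‖) := by
    have hc : Continuous
        (fun ε : ℝ ↦ ‖x * d + d * y‖ + ε * (s ^ 2 * ‖d‖ + ‖x * d * y‖)) := by fun_prop
    simpa using (hc.tendsto 0).mono_left nhdsWithin_le_nhds
  refine ge_of_tendsto hlim ?_
  filter_upwards [Ioc_mem_nhdsGT (lt_min hδ₁ hδ₂)] with ε hε using key ε hε.1 hε.2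

lemma algebraMap_sqrt_le_sqrt {a : 𝒜} {m : ℝ} (hm : 0 ≤ m) (h : m • (1 : 𝒜) ≤ a) :
    algebraMap ℝ 𝒜 (√m) ≤ CFC.sqrt a := by
  have h0 : CFC.sqrt (m • (1 : 𝒜)) = algebraMap ℝ 𝒜 (√m) := by
    refine CFC.sqrt_unique ?_ (algebraMap_nonneg 𝒜 (Real.sqrt_nonneg m))
    rw [← map_mul, Real.mul_self_sqrt hm, Algebra.algebraMap_eq_smul_one]
  exact h0 ▸ CFC.sqrt_le_sqrt _ _ h

lemma isUnit_sqrt_of_smul_one_le {a : 𝒜} {m : ℝ} (hm : 0 < m) (h : m • (1 : 𝒜) ≤ a) :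
    IsUnit (CFC.sqrt a) := by
  refine CStarAlgebra.isUnit_of_le (algebraMap ℝ 𝒜 (√m)) (algebraMap_sqrt_le_sqrt hm.le h) ?_
  exact ((IsUnit.mk0 (√m) (Real.sqrt_pos.2 hm).ne').map (algebraMap ℝ 𝒜)).isStrictlyPositive
    (algebraMap_nonneg 𝒜 (Real.sqrt_nonneg m))

end Aux


/-- Lipschitz estimate for the inverse operator square root in a unital C*-algebra:
if `a, b` are self-adjoint with `m • 1 ≤ a`, `m • 1 ≤ b`, `m > 0`, then `√a` and `√b`
are invertible and `‖(√a)⁻¹ − (√b)⁻¹‖ ≤ ‖a − b‖ / (2 m^{3/2})`. -/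
theorem inv_sqrt_lipschitz {𝒜 : Type*} [CStarAlgebra 𝒜] [PartialOrder 𝒜]
    [StarOrderedRing 𝒜]
    (a b : 𝒜) (ha : IsSelfAdjoint a) (hb : IsSelfAdjoint b)
    (m : ℝ) (hm : 0 < m) (hma : m • (1 : 𝒜) ≤ a) (hmb : m • (1 : 𝒜) ≤ b) :
    IsUnit (CFC.sqrt a) ∧ IsUnit (CFC.sqrt b) ∧
    ‖Ring.inverse (CFC.sqrt a) - Ring.inverse (CFC.sqrt b)‖
      ≤ ‖a - b‖ / (2 * m ^ ((3 : ℝ) / 2)) := by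
  have hs : 0 < √m := Real.sqrt_pos.2 hm
  have hm0 : 0 ≤ m • (1 : 𝒜) := smul_nonneg hm.le zero_le_one
  have hx := algebraMap_sqrt_le_sqrt hm.le hma
  have hy := algebraMap_sqrt_le_sqrt hm.le hmb
  have hxu := isUnit_sqrt_of_smul_one_le hm hma
  have hyu := isUnit_sqrt_of_smul_one_le hm hmb
  refine ⟨hxu, hyu, ?_⟩
  have hxx : CFC.sqrt a * CFC.sqrt a = a := CFC.sqrt_mul_sqrt_self a (hm0.trans hma)
  have hyy : CFC.sqrt b * CFC.sqrt b = b := CFC.sqrt_mul_sqrt_self b (hm0.trans hmb)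
  generalize CFC.sqrt a = x at *
  generalize CFC.sqrt b = y at *
  have h1 : 2 * √m * ‖x - y‖ ≤ ‖a - b‖ := by
    have h := two_mul_norm_le_norm_sylvester hs.le hx hy (x - y)
    have e : x * (x - y) + (x - y) * y = a - b := by
      rw [← hxx, ← hyy]; noncomm_ring
    rwa [e] at h
  set z := Ring.inverse x - Ring.inverse y with hz
  have h2 : √m * (√m * ‖z‖) ≤ ‖x - y‖ := by
    have e : x * (z * y) = y - x := by
      rw [hz, sub_mul, mul_sub, Ring.inverse_mul_cancel y hyu, ← mul_assoc,
        Ring.mul_inverse_cancel x hxu, one_mul, mul_one]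
    calc √m * (√m * ‖z‖) ≤ √m * ‖z * y‖ := by
          gcongr
          exact mul_norm_le_norm_mul_right hs.le hy z
      _ ≤ ‖x * (z * y)‖ := mul_norm_le_norm_mul_left hs.le hx _
      _ = ‖x - y‖ := by rw [e, norm_sub_rev]
  have h3 : m ^ ((3 : ℝ) / 2) = √m * √m * √m := by
    rw [Real.mul_self_sqrt hm.le, Real.sqrt_eq_rpow, ← Real.rpow_one_add' hm.le (by norm_num)]
    norm_num
  rw [h3, le_div_iff₀ (by positivity)]
  calc ‖z‖ * (2 * (√m * √m * √m)) = 2 * √m * (√m * (√m * ‖z‖)) := by ring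
    _ ≤ 2 * √m * ‖x - y‖ := by gcongr
    _ ≤ ‖a - b‖ := h1
end

section
/- Hellmann–Feynman identity for bounded self-adjoint families: let E be a complex Hilbert space, let H : ℝ → B(E) be a family of bounded self-adjoint operators that has derivative Ḣ ∈ B(E) at t₀, let ψ : ℝ → E have derivative ψ̇ ∈ E at t₀ with ‖ψ(t)‖ = 1 for all t in a neighborhood of t₀, and let μ : ℝ → ℝ be a function with H(t)ψ(t) = μ(t)·ψ(t) for all t in that neighborhood. Then μ is differentiable at t₀ and μ'(t₀) = Re⟪ψ(t₀), Ḣ ψ(t₀)⟫. -/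
/-!
Since `ψ t` is a unit vector near `t₀`, the eigenvalue is the Rayleigh quotient
`μ t = Re ⟪ψ t, H t (ψ t)⟫`, which is differentiable by the product rule. Self-adjointness and the
eigenvalue equation turn the two terms containing `ψdot` into
`μ t₀ * (⟪ψ t₀, ψdot⟫ + ⟪ψdot, ψ t₀⟫)`, the multiple by `μ t₀` of the derivative of the constant
`⟪ψ t, ψ t⟫ = 1`; hence only `⟪ψ t₀, Hdot (ψ t₀)⟫` survives.
-/

open scoped InnerProductSpace

/-- Hellmann–Feynman identity for bounded self-adjoint families: if `H(t)ψ(t) = μ(t)·ψ(t)`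
with `‖ψ(t)‖ = 1` near `t₀`, `H` and `ψ` differentiable at `t₀`, then `μ` is
differentiable at `t₀` with `μ'(t₀) = Re⟪ψ(t₀), Ḣ ψ(t₀)⟫`. -/
theorem hellmann_feynman {E : Type*} [NormedAddCommGroup E]
    [InnerProductSpace ℂ E] [CompleteSpace E]
    (H : ℝ → E →L[ℂ] E) (Hdot : E →L[ℂ] E) (t₀ : ℝ)
    (hsa : ∀ t, ∀ x y : E, ⟪(H t) x, y⟫_ℂ = ⟪x, (H t) y⟫_ℂ)
    (hH : HasDerivAt H Hdot t₀)
    (ψ : ℝ → E) (ψdot : E) (hψ : HasDerivAt ψ ψdot t₀)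
    (hnorm : ∀ᶠ t in nhds t₀, ‖ψ t‖ = 1)
    (μ : ℝ → ℝ) (heig : ∀ᶠ t in nhds t₀, (H t) (ψ t) = μ t • ψ t) :
    HasDerivAt μ ((⟪ψ t₀, Hdot (ψ t₀)⟫_ℂ).re) t₀ := by
  -- The product rule over `ℝ` needs real-linear operators, hence the restriction of scalars.
  have hHψ : HasDerivAt (fun t => (H t) (ψ t)) (Hdot (ψ t₀) + (H t₀) ψdot) t₀ :=
    ((ContinuousLinearMap.restrictScalarsL ℂ E E ℝ ℝ).hasFDerivAt.comp_hasDerivAt t₀ hH).clm_apply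
      hψ
  have hray := hψ.inner ℂ hHψ
  have hre := Complex.reCLM.hasFDerivAt.comp_hasDerivAt t₀ hray
  have horth : ⟪ψ t₀, ψdot⟫_ℂ + ⟪ψdot, ψ t₀⟫_ℂ = 0 := by
    refine (hψ.inner ℂ hψ).unique ((hasDerivAt_const t₀ (1 : ℂ)).congr_of_eventuallyEq ?_)
    filter_upwards [hnorm] with t ht
    simp [inner_self_eq_norm_sq_to_K, ht]
  have hμ : μ =ᶠ[nhds t₀] fun t => (⟪ψ t, (H t) (ψ t)⟫_ℂ).re := by
    filter_upwards [hnorm, heig] with t ht he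
    rw [he, ← Complex.coe_smul, inner_smul_right, inner_self_eq_norm_sq_to_K, ht]
    simp
  have hcancel : ⟪ψ t₀, (H t₀) ψdot⟫_ℂ + ⟪ψdot, (H t₀) (ψ t₀)⟫_ℂ = 0 := by
    rw [← hsa, heig.self_of_nhds, ← Complex.coe_smul, inner_smul_left, inner_smul_right,
      Complex.conj_ofReal, ← mul_add, horth, mul_zero]
  refine (hre.congr_of_eventuallyEq hμ).congr_deriv ?_
  rw [inner_add_right, add_assoc, hcancel, add_zero, Complex.reCLM_apply]
end

section
/- Weighted Hellmann–Feynman identity (abstract Hilbert-space version of Theorem 4.3): let E be a complex Hilbert space, let D ∈ B(E) be self-adjoint, let A : ℝ → B(E) be a family of bounded self-adjoint operators that has derivative Ȧ ∈ B(E) at t₀, let φ : ℝ → E have derivative φ̇ ∈ E at t₀, and let λ : ℝ → ℝ have derivative λ'(t₀) at t₀. Assume that for all t in a neighborhood of t₀ one has D φ(t) = λ(t)·A(t)φ(t) and Re⟪A(t)φ(t), φ(t)⟫ = 1. Then λ'(t₀) = −λ(t₀)·Re⟪Ȧ φ(t₀), φ(t₀)⟫. -/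
open scoped InnerProductSpace

/-!
Differentiating the eigenvalue equation at `t₀` gives
`D φ̇ = λ' A φ + λ (Ȧ φ + A φ̇)`. Pairing with `φ(t₀)`, the self-adjointness of `D` and `A`
and the equation at `t₀` give `⟪D φ̇, φ⟫ = ⟪φ̇, D φ⟫ = λ ⟪φ̇, A φ⟫ = λ ⟪A φ̇, φ⟫`, so the terms
in `φ̇` cancel. The real part of what remains, with the normalization at `t₀`, is
`0 = λ' + λ Re⟪Ȧ φ, φ⟫`.
-/

/-- Weighted Hellmann–Feynman identity (abstract Hilbert-space version of Theorem 4.3):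
if `D φ(t) = λ(t)·A(t)φ(t)` with normalization `Re⟪A(t)φ(t), φ(t)⟫ = 1` near `t₀`,
where `D` is bounded self-adjoint, the self-adjoint family `A` has derivative `Ȧ` at
`t₀`, and `φ`, `λ` are differentiable at `t₀`, then
`λ'(t₀) = −λ(t₀)·Re⟪Ȧ φ(t₀), φ(t₀)⟫`. -/
theorem weighted_hellmann_feynman {E : Type*} [NormedAddCommGroup E]
    [InnerProductSpace ℂ E] [CompleteSpace E]
    (D : E →L[ℂ] E) (hD : ∀ x y : E, ⟪D x, y⟫_ℂ = ⟪x, D y⟫_ℂ)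
    (A : ℝ → E →L[ℂ] E) (Adot : E →L[ℂ] E) (t₀ : ℝ)
    (hAsa : ∀ t, ∀ x y : E, ⟪(A t) x, y⟫_ℂ = ⟪x, (A t) y⟫_ℂ)
    (hA : HasDerivAt A Adot t₀)
    (φ : ℝ → E) (φdot : E) (hφ : HasDerivAt φ φdot t₀)
    (lam : ℝ → ℝ) (lam' : ℝ) (hlam : HasDerivAt lam lam' t₀)
    (heig : ∀ᶠ t in nhds t₀, D (φ t) = lam t • (A t) (φ t))
    (hnormz : ∀ᶠ t in nhds t₀, (⟪(A t) (φ t), φ t⟫_ℂ).re = 1) :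
    lam' = -lam t₀ * (⟪Adot (φ t₀), φ t₀⟫_ℂ).re := by
  -- The product rule for `t ↦ A t (φ t)` is applied over `ℝ`, after restriction of scalars.
  have hAR : HasDerivAt (fun t => (A t).restrictScalars ℝ) (Adot.restrictScalars ℝ) t₀ :=
    (ContinuousLinearMap.restrictScalarsL ℂ E E ℝ ℝ).hasFDerivAt.comp_hasDerivAt t₀ hA
  have hAφ : HasDerivAt (fun t => A t (φ t)) (Adot (φ t₀) + A t₀ φdot) t₀ :=
    hAR.clm_apply hφ
  have hDφ : HasDerivAt (fun t => D (φ t)) (D φdot) t₀ :=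
    (D.restrictScalars ℝ).hasFDerivAt.comp_hasDerivAt t₀ hφ
  have hderiv : D φdot = lam t₀ • (Adot (φ t₀) + A t₀ φdot) + lam' • A t₀ (φ t₀) :=
    hDφ.unique ((hlam.smul hAφ).congr_of_eventuallyEq heig)
  have hcancel : ⟪D φdot, φ t₀⟫_ℂ = lam t₀ * ⟪A t₀ φdot, φ t₀⟫_ℂ := by
    rw [hD, heig.self_of_nhds, hAsa, ← Complex.coe_smul, inner_smul_right]
  have hone := hnormz.self_of_nhds
  rw [hderiv, ← Complex.coe_smul, ← Complex.coe_smul, inner_add_left, inner_smul_left,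
    inner_smul_left, inner_add_left, Complex.conj_ofReal, Complex.conj_ofReal] at hcancel
  have hre := congrArg Complex.re hcancel
  simp only [Complex.add_re, Complex.re_ofReal_mul, hone] at hre
  linarith
end

section
/- Eigenvalue derivative bound for weighted eigenpairs (abstract Hilbert-space version of Corollary 4.4): let E be a complex Hilbert space, let D ∈ B(E) be self-adjoint, let A : ℝ → B(E) be a family of bounded self-adjoint operators that has derivative Ȧ ∈ B(E) at t₀, let φ : ℝ → E have derivative φ̇ ∈ E at t₀, and let λ : ℝ → ℝ have derivative λ'(t₀) at t₀. Assume that for all t in a neighborhood of t₀ one has D φ(t) = λ(t)·A(t)φ(t) and Re⟪A(t)φ(t), φ(t)⟫ = 1, and that for some m > 0 one has m·⟪x, x⟫ ≤ ⟪A(t₀)x, x⟫ for all x ∈ E. Then |λ'(t₀)| ≤ (‖Ȧ‖ / m)·|λ(t₀)|. -/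
/-!
Differentiating the eigenvalue equation `D φ = λ A φ` at `t₀` gives
`D φ̇ = λ' A φ + λ (Ȧ φ + A φ̇)`. Pairing with `φ(t₀)`, the terms containing `φ̇` cancel because `D`
and `A(t₀)` are self-adjoint and `D φ(t₀) = λ(t₀) A(t₀) φ(t₀)`. With the normalization
`Re⟪A φ, φ⟫ = 1` what remains is the weighted Hellmann–Feynman identity `λ' = -λ Re⟪Ȧ φ, φ⟫`.
The bound follows from Cauchy–Schwarz and `m ‖φ(t₀)‖² ≤ 1`, which is coercivity at `x = φ(t₀)`.
-/

open scoped InnerProductSpace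

/-- Eigenvalue derivative bound for weighted eigenpairs (abstract Hilbert-space version of
Corollary 4.4): under the weighted Hellmann–Feynman hypotheses and the coercivity bound
`m·⟪x, x⟫ ≤ ⟪A(t₀)x, x⟫`, one has `|λ'(t₀)| ≤ (‖Ȧ‖ / m)·|λ(t₀)|`. -/
theorem weighted_eigenvalue_derivative_bound {E : Type*} [NormedAddCommGroup E]
    [InnerProductSpace ℂ E] [CompleteSpace E]
    (D : E →L[ℂ] E) (hD : ∀ x y : E, ⟪D x, y⟫_ℂ = ⟪x, D y⟫_ℂ)
    (A : ℝ → E →L[ℂ] E) (Adot : E →L[ℂ] E) (t₀ : ℝ)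
    (hAsa : ∀ t, ∀ x y : E, ⟪(A t) x, y⟫_ℂ = ⟪x, (A t) y⟫_ℂ)
    (hA : HasDerivAt A Adot t₀)
    (φ : ℝ → E) (φdot : E) (hφ : HasDerivAt φ φdot t₀)
    (lam : ℝ → ℝ) (lam' : ℝ) (hlam : HasDerivAt lam lam' t₀)
    (heig : ∀ᶠ t in nhds t₀, D (φ t) = lam t • (A t) (φ t))
    (hnormz : ∀ᶠ t in nhds t₀, (⟪(A t) (φ t), φ t⟫_ℂ).re = 1)
    (m : ℝ) (hm : 0 < m)
    (hcoer : ∀ x : E, m * (⟪x, x⟫_ℂ).re ≤ (⟪(A t₀) x, x⟫_ℂ).re) :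
    |lam'| ≤ (‖Adot‖ / m) * |lam t₀| := by
  -- The product rule for operator application is applied over `ℝ`, the field of the parameter `t`.
  have hAr : HasDerivAt (fun t => (A t).restrictScalars ℝ) (Adot.restrictScalars ℝ) t₀ :=
    (ContinuousLinearMap.restrictScalarsL ℂ E E ℝ ℝ).hasFDerivAt.comp_hasDerivAt t₀ hA
  have hAφ : HasDerivAt (fun t => (A t) (φ t)) (Adot (φ t₀) + (A t₀) φdot) t₀ :=
    hAr.clm_apply hφ
  have hDφ : HasDerivAt (fun t => D (φ t)) (D φdot) t₀ :=
    (D.restrictScalars ℝ).hasFDerivAt.comp_hasDerivAt t₀ hφ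
  have hderiv : D φdot
      = lam t₀ • (Adot (φ t₀) + (A t₀) φdot) + lam' • (A t₀) (φ t₀) :=
    hDφ.unique ((hlam.smul hAφ).congr_of_eventuallyEq heig)
  have heig₀ := heig.self_of_nhds
  have hnorm₀ := hnormz.self_of_nhds
  have hcancel : (⟪D φdot, φ t₀⟫_ℂ).re = lam t₀ * (⟪(A t₀) φdot, φ t₀⟫_ℂ).re := by
    rw [hD, heig₀, hAsa, inner_smul_right_eq_smul, Complex.smul_re, smul_eq_mul]
  have hHF : lam' = -(lam t₀ * (⟪Adot (φ t₀), φ t₀⟫_ℂ).re) := by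
    have h := congrArg (fun v => (⟪v, φ t₀⟫_ℂ).re) hderiv
    simp only [inner_add_left, inner_smul_left_eq_smul, Complex.add_re, Complex.smul_re,
      smul_eq_mul, hcancel, hnorm₀] at h
    linarith
  have hφm : ‖φ t₀‖ ^ 2 ≤ 1 / m := by
    have h := hcoer (φ t₀)
    rw [hnorm₀, inner_self_eq_norm_sq_to_K] at h
    rw [le_div_iff₀ hm, mul_comm]
    exact_mod_cast h
  have hAdot : |(⟪Adot (φ t₀), φ t₀⟫_ℂ).re| ≤ ‖Adot‖ / m :=
    calc |(⟪Adot (φ t₀), φ t₀⟫_ℂ).re| ≤ ‖⟪Adot (φ t₀), φ t₀⟫_ℂ‖ := Complex.abs_re_le_norm _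
      _ ≤ ‖Adot (φ t₀)‖ * ‖φ t₀‖ := norm_inner_le_norm _ _
      _ ≤ ‖Adot‖ * ‖φ t₀‖ * ‖φ t₀‖ := by gcongr; exact Adot.le_opNorm _
      _ = ‖Adot‖ * ‖φ t₀‖ ^ 2 := by ring
      _ ≤ ‖Adot‖ * (1 / m) := by gcongr
      _ = ‖Adot‖ / m := by ring
  rw [hHF, abs_neg, abs_mul, mul_comm]
  gcongr
end

section
/- Pinning of the spectral index shift (the k = 0 step in the proof of Theorem 3.5): let u, v : ℤ → ℝ be nondecreasing functions, let m ≥ 1 be a natural number, and assume u(−1) < 0, u(m) > 0, v(0) = 0 and v(m−1) = 0. Let ε > 0 satisfy 2ε ≤ arsinh(−u(−1)) and 2ε ≤ arsinh(u(m)). If k ∈ ℤ is such that |arsinh(u(j)) − arsinh(v(j+k))| < ε for all j ∈ ℤ, then k = 0. -/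
/-- Pinning of the spectral index shift (the `k = 0` step in the proof of Theorem 3.5):
let `u, v : ℤ → ℝ` be nondecreasing with `u (-1) < 0`, `u m > 0`, `v 0 = 0` and
`v (m - 1) = 0` for some natural number `m ≥ 1`, and let `ε > 0` satisfy
`2ε ≤ arsinh (-u (-1))` and `2ε ≤ arsinh (u m)`. If `k : ℤ` satisfies
`|arsinh (u j) − arsinh (v (j + k))| < ε` for all `j`, then `k = 0`. -/
theorem spectral_index_shift_zero (u v : ℤ → ℝ) (hu : Monotone u) (hv : Monotone v)
    (m : ℕ) (hm : 1 ≤ m)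
    (hu_neg : u (-1) < 0) (hu_pos : u (m : ℤ) > 0)
    (hv0 : v 0 = 0) (hvm : v ((m : ℤ) - 1) = 0)
    (ε : ℝ) (hε : 0 < ε)
    (hε1 : 2 * ε ≤ Real.arsinh (-u (-1))) (hε2 : 2 * ε ≤ Real.arsinh (u (m : ℤ)))
    (k : ℤ) (hk : ∀ j : ℤ, |Real.arsinh (u j) - Real.arsinh (v (j + k))| < ε) :
    k = 0 := by
  -- At `j = -1` the entry `v (k - 1)` is negative, hence lies strictly left of index `0`.
  have h1 : v (-1 + k) < v 0 := by
    rw [Real.arsinh_neg] at hε1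
    have h := (abs_lt.mp (hk (-1))).1
    rw [hv0, ← Real.arsinh_neg_iff]
    linarith
  -- At `j = m` the entry `v (m + k)` is positive, hence lies strictly right of index `m - 1`.
  have h2 : v ((m : ℤ) - 1) < v (m + k) := by
    have h := (abs_lt.mp (hk m)).2
    rw [hvm, ← Real.arsinh_pos_iff]
    linarith
  have h3 := hv.reflect_lt h1
  have h4 := hv.reflect_lt h2
  omega
end
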